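/- arXiv:2003.09933 — 3 statements merged into one kernel-verified Lean document; each statement's English description precedes it below -/
import Mathlib

section
/- Let G be a group and K a subgroup such that |x^G| ≤ n for each x ∈ K, where n is a positive integer. Then the derived (commutator) subgroup of the normal closure H = ⟨K^G⟩ is finite, with order bounded by a function of n only. -/
section Helpers

open scoped Pointwise commutatorElement

lemma cent_index {G : Type} [Group G] {n : ℕ} (x : G)
    (h : (conjugatesOf x).Finite ∧ Nat.card (conjugatesOf x) ≤ n) :
    (Subgroup.centralizer {x}).index ≠ 0 ∧ (Subgroup.centralizer {x}).index ≤ n := by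
  have h1 : (MulAction.stabilizer (ConjAct G) x).index = (conjugatesOf x).ncard := by
    rw [MulAction.index_stabilizer, ConjAct.orbit_eq_carrier_conjClasses]; rfl
  rw [ConjAct.stabilizer_eq_centralizer] at h1
  have h2 : (Subgroup.centralizer {x}).index = (conjugatesOf x).ncard := h1
  rw [h2]
  refine ⟨?_, h.2⟩
  exact Set.ncard_ne_zero_of_mem (a := x) mem_conjugatesOf_self h.1

lemma order_bound {G : Type} [Group G] {n : ℕ} (a y : G)
    (ha : (Subgroup.centralizer {a}).index ≠ 0 ∧ (Subgroup.centralizer {a}).index ≤ n)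
    (hy : (Subgroup.centralizer {y}).index ≠ 0 ∧ (Subgroup.centralizer {y}).index ≤ n)
    (e : ℕ) (he : a ^ e = y ^ e) : (y * a⁻¹) ^ ((n * n).factorial * e) = 1 := by
  set L := Subgroup.closure {a, y}
  set C := Subgroup.centralizer {a} ⊓ Subgroup.centralizer {y} with hC
  have hC0 : C.index ≠ 0 := Subgroup.index_inf_ne_zero ha.1 hy.1
  have hC1 : C.index ≤ n * n := (Subgroup.index_inf_le).trans (Nat.mul_le_mul ha.2 hy.2)
  have hrel : (C.subgroupOf L).index ≤ C.index := by
    have := Subgroup.relIndex_le_of_le_right (H := C) (K := L) (L := ⊤) le_top (by simpa using hC0)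
    rwa [Subgroup.relIndex_top_right] at this
  have hrel0 : (C.subgroupOf L).index ≠ 0 := by
    have : C.FiniteIndex := ⟨hC0⟩
    exact Subgroup.FiniteIndex.index_ne_zero
  have hle : C.subgroupOf L ≤ Subgroup.center L := by
    intro g hg
    rw [Subgroup.mem_subgroupOf] at hg
    rw [Subgroup.mem_center_iff]
    rintro ⟨l, hl⟩
    apply Subtype.ext
    have : L ≤ Subgroup.centralizer {(g : G)} := by
      rw [Subgroup.closure_le]
      obtain ⟨h1, h2⟩ := hg
      rintro z (rfl | rfl)
      · simp [Subgroup.mem_centralizer_singleton_iff] at h1 ⊢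
        exact h1.symm
      · simp [Subgroup.mem_centralizer_singleton_iff] at h2 ⊢
        exact h2.symm
    have := Subgroup.mem_centralizer_singleton_iff.1 (this hl)
    simpa using this
  have : (C.subgroupOf L).FiniteIndex := ⟨hrel0⟩
  have : (Subgroup.center L).FiniteIndex := Subgroup.finiteIndex_of_le hle
  set i := (Subgroup.center L).index with hi
  have hi1 : i ≤ n * n := ((Subgroup.index_antitone hle).trans hrel).trans hC1
  have hi0 : 0 < i := Nat.pos_of_ne_zero Subgroup.FiniteIndex.index_ne_zero
  let A : L := ⟨a, Subgroup.subset_closure (by simp)⟩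
  let Y : L := ⟨y, Subgroup.subset_closure (by simp)⟩
  have key : ∀ g : L, ((MonoidHom.transferCenterPow L g : Subgroup.center L) : L) = g ^ i :=
    fun g => MonoidHom.transferCenterPow_apply g
  have h1 : (MonoidHom.transferCenterPow L (Y * A⁻¹)) ^ e = 1 := by
    rw [map_mul, map_inv, Commute.mul_pow (Subtype.ext (Subgroup.mem_center_iff.1 (Subtype.property _) _)), inv_pow, mul_inv_eq_one]
    apply Subtype.ext
    push_cast
    rw [key, key, ← pow_mul, ← pow_mul, mul_comm i e, pow_mul, pow_mul]
    congr 1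
    apply Subtype.ext
    simpa [A, Y] using he.symm
  have h2 : (y * a⁻¹) ^ (i * e) = 1 := by
    have := congrArg (fun z : Subgroup.center L => ((z : L) : G)) h1
    simp only [Subgroup.coe_pow, key] at this
    rw [pow_mul]
    simpa [A, Y] using this
  obtain ⟨c, hc⟩ := Nat.dvd_factorial hi0 hi1
  rw [hc, mul_right_comm, pow_mul, h2, one_pow]

lemma move_front {G : Type} [Group G] [DecidableEq G] (S : Finset G)
    (hS : ∀ s ∈ S, ∀ g : G, g * s * g⁻¹ ∈ S) (s : G) :
    ∀ (j : ℕ) (l : List G), (∀ x ∈ l, x ∈ S) → j ≤ l.count s →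
      ∃ l' : List G, (∀ x ∈ l', x ∈ S) ∧ l'.length + j = l.length ∧ l.prod = s ^ j * l'.prod := by
  intro j l
  induction l generalizing j with
  | nil => intro _ h; simp at h; subst h; exact ⟨[], by simp⟩
  | cons x l ih =>
    intro hl hj
    have hl' : ∀ x ∈ l, x ∈ S := fun z hz => hl z (List.mem_cons_of_mem _ hz)
    by_cases hx : x = s
    · subst hx
      rcases j with _ | j
      · exact ⟨x :: l, hl, by simp, by simp⟩
      · obtain ⟨l', h1, h2, h3⟩ := ih j hl' (by simpa using hj)
        refine ⟨l', h1, by simp; omega, ?_⟩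
        rw [List.prod_cons, h3, pow_succ']; group
    · obtain ⟨l', h1, h2, h3⟩ := ih j hl' (by rwa [List.count_cons_of_ne hx] at hj)
      refine ⟨((s ^ j)⁻¹ * x * s ^ j) :: l', ?_, by simp; omega, ?_⟩
      · intro z hz
        rcases List.mem_cons.1 hz with rfl | hz
        · simpa using hS x (hl x (by simp)) (s ^ j)⁻¹
        · exact h1 z hz
      · rw [List.prod_cons, List.prod_cons, h3]; group

lemma shorten {G : Type} [Group G] [DecidableEq G] (S : Finset G)
    (hS : ∀ s ∈ S, ∀ g : G, g * s * g⁻¹ ∈ S) (E : ℕ) (hE0 : 0 < E) (hE : ∀ s ∈ S, s ^ E = 1) :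
    ∀ (m : ℕ) (l : List G), l.length = m → (∀ x ∈ l, x ∈ S) →
      ∃ l' : List G, (∀ x ∈ l', x ∈ S) ∧ l'.length ≤ S.card * E ∧ l.prod = l'.prod := by
  intro m
  induction m using Nat.strong_induction_on with
  | _ m ih =>
    intro l hm hl
    by_cases h : l.length ≤ S.card * E
    · exact ⟨l, hl, h, rfl⟩
    push Not at h
    have : ∃ s ∈ S, E ≤ l.count s := by
      by_contra! hc
      have h1 : ∑ s ∈ S, l.count s = l.length := by
        have := Multiset.sum_count_eq_card (s := S) (m := (l : Multiset G)) (by simpa using hl)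
        simpa using this
      have h2 : ∑ s ∈ S, l.count s ≤ ∑ s ∈ S, E := Finset.sum_le_sum fun s hs => (hc s hs).le
      simp at h2
      omega
    obtain ⟨s, hs, hc⟩ := this
    obtain ⟨l', h1, h2, h3⟩ := move_front S hS s E l hl hc
    obtain ⟨l'', h4, h5, h6⟩ := ih l'.length (by omega) l' rfl h1
    exact ⟨l'', h4, h5, by rw [h3, hE s hs, one_mul, h6]⟩

lemma dietzmann {G : Type} [Group G] (S : Set G) (hfin : S.Finite) (k : ℕ) (hk : S.ncard ≤ k)
    (hS : ∀ s ∈ S, ∀ g : G, g * s * g⁻¹ ∈ S) (hinv : ∀ s ∈ S, s⁻¹ ∈ S)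
    (E : ℕ) (hE0 : 0 < E) (hE : ∀ s ∈ S, s ^ E = 1) :
    ((Subgroup.closure S : Subgroup G) : Set G).Finite ∧
      ((Subgroup.closure S : Subgroup G) : Set G).ncard ≤ (k + 1) ^ (k * E) := by
  classical
  obtain ⟨S, rfl⟩ := hfin.exists_finset_coe
  simp only [Finset.mem_coe, Set.ncard_coe_finset] at *
  have hsub : ((Subgroup.closure (S : Set G) : Subgroup G) : Set G) ⊆
      ((insert 1 S) ^ (S.card * E) : Finset G) := by
    intro g hg
    have hg' : g ∈ (Subgroup.closure (S : Set G)).toSubmonoid := hg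
    rw [Subgroup.closure_toSubmonoid] at hg'
    have hsi : (S : Set G) ∪ (S : Set G)⁻¹ = S := by
      apply Set.union_eq_left.2
      intro z hz
      simpa using hinv _ hz
    rw [hsi] at hg'
    obtain ⟨l, hl, rfl⟩ := Submonoid.exists_list_of_mem_closure hg'
    obtain ⟨l', h1, h2, h3⟩ := shorten S hS E hE0 hE l.length l rfl hl
    rw [h3]
    have : ∀ l : List G, (∀ x ∈ l, x ∈ S) → l.prod ∈ ((insert 1 S) ^ l.length : Finset G) := by
      intro l
      induction l with
      | nil => simp
      | cons x l ih =>
        intro hl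
        rw [List.prod_cons, List.length_cons, pow_succ']
        exact Finset.mul_mem_mul (by simp [hl x (by simp)])
          (ih fun z hz => hl z (List.mem_cons_of_mem _ hz))
    exact Finset.pow_subset_pow_right (by simp) h2 (this l' h1)
  refine ⟨(Finset.finite_toSet _).subset hsub, ?_⟩
  calc _ ≤ _ := Set.ncard_le_ncard hsub (Finset.finite_toSet _)
    _ = _ := Set.ncard_coe_finset _
    _ ≤ _ := Finset.card_pow_le
    _ ≤ (k + 1) ^ (S.card * E) := Nat.pow_le_pow_left ((Finset.card_insert_le _ _).trans (by omega)) _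
    _ ≤ _ := Nat.pow_le_pow_right (by omega) (Nat.mul_le_mul_right _ hk)

lemma ball_closed {G : Type} [Group G] (X : Set G) (h1 : (1 : G) ∈ X) (hinv : ∀ x ∈ X, x⁻¹ ∈ X)
    (a : G) (F : Set G) (hF : F.Finite) (n : ℕ) (hn : F.ncard ≤ n)
    (haF : ∀ b : G, b ∈ Subgroup.closure X → b * a * b⁻¹ ∈ F) :
    ∀ h ∈ Subgroup.closure X, ∃ b ∈ X ^ n, b * a * b⁻¹ = h * a * h⁻¹ := by
  classical
  let O : ℕ → Set G := fun k => (fun b => b * a * b⁻¹) '' (X ^ k)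
  have hpow : ∀ k, X ^ k ⊆ (Subgroup.closure X : Set G) := by
    intro k
    induction k with
    | zero => simp [Set.one_subset]
    | succ k ih =>
      rw [pow_succ']
      rintro _ ⟨x, hx, y, hy, rfl⟩
      exact mul_mem (Subgroup.subset_closure hx) (ih hy)
  have hOF : ∀ k, O k ⊆ F := by
    rintro k _ ⟨b, hb, rfl⟩
    exact haF b (hpow k hb)
  have hOfin : ∀ k, (O k).Finite := fun k => hF.subset (hOF k)
  have hstep : ∀ k, ∀ x ∈ X, ∀ s ∈ O k, x * s * x⁻¹ ∈ O (k + 1) := by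
    rintro k x hx _ ⟨b, hb, rfl⟩
    refine ⟨x * b, ?_, by group⟩
    rw [pow_succ']
    exact Set.mul_mem_mul hx hb
  have hmono : ∀ k, O k ⊆ O (k + 1) := by
    intro k s hs
    simpa using hstep k 1 h1 s hs
  have hsucc : ∀ k, ∀ s ∈ O (k + 1), ∃ x ∈ X, ∃ t ∈ O k, s = x * t * x⁻¹ := by
    rintro k _ ⟨b, hb, rfl⟩
    rw [pow_succ'] at hb
    obtain ⟨x, hx, y, hy, rfl⟩ := hb
    exact ⟨x, hx, y * a * y⁻¹, ⟨y, hy, rfl⟩, by simp; group⟩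
  have hdich : ∀ k, (O (k + 1) ⊆ O k) ∨ k + 1 ≤ (O k).ncard := by
    intro k
    induction k with
    | zero =>
      right
      have : a ∈ O 0 := ⟨1, by simp, by simp⟩
      exact Nat.pos_of_ne_zero (Set.ncard_ne_zero_of_mem this (hOfin 0))
    | succ k ih =>
      by_cases hc : O (k + 1) ⊆ O k
      · left
        intro s hs
        obtain ⟨x, hx, t, ht, rfl⟩ := hsucc _ s hs
        exact hstep _ x hx t (hc ht)
      · right
        have h3 := ih.resolve_left hc
        have : O k ⊂ O (k + 1) := ⟨hmono k, hc⟩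
        have := Set.ncard_lt_ncard this (hOfin _)
        omega
  have hcl : O (n + 1) ⊆ O n := by
    refine (hdich n).resolve_right fun h => ?_
    have := Set.ncard_le_ncard (hOF n) hF
    omega
  have hmem : ∀ k, a ∈ O k := by
    intro k
    induction k with
    | zero => exact ⟨1, by simp, by simp⟩
    | succ k ih => exact hmono k ih
  intro h hh
  have hh' : h ∈ (Subgroup.closure X).toSubmonoid := hh
  rw [Subgroup.closure_toSubmonoid] at hh'
  have hsi : X ∪ X⁻¹ = X := by
    apply Set.union_eq_left.2
    intro z hz
    simpa using hinv _ hz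
  rw [hsi] at hh'
  change h * a * h⁻¹ ∈ O n
  induction hh' using Submonoid.closure_induction_left with
  | one => simpa using hmem n
  | mul_left x hx y hy ih =>
    have hy' : y ∈ Subgroup.closure X := by
      have : x * y ∈ Subgroup.closure X := hh
      have := mul_mem (inv_mem (Subgroup.subset_closure hx)) this
      simpa using this
    have := hcl (hstep n x hx _ (ih hy'))
    convert this using 1
    group

lemma cent_pow {G : Type} [Group G] {n : ℕ} (X : Set G)
    (hX : ∀ x ∈ X, (Subgroup.centralizer {x}).index ≠ 0 ∧ (Subgroup.centralizer {x}).index ≤ n) :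
    ∀ k, ∀ b ∈ X ^ k,
      (Subgroup.centralizer {b}).index ≠ 0 ∧ (Subgroup.centralizer {b}).index ≤ n ^ k := by
  intro k
  induction k with
  | zero =>
    intro b hb
    simp at hb
    subst hb
    have : Subgroup.centralizer {(1 : G)} = ⊤ := by
      ext z; simp [Subgroup.mem_centralizer_singleton_iff]
    rw [this]; simp
  | succ k ih =>
    intro b hb
    rw [pow_succ'] at hb
    obtain ⟨x, hx, y, hy, rfl⟩ := hb
    have hle : Subgroup.centralizer {x} ⊓ Subgroup.centralizer {y} ≤
        Subgroup.centralizer {x * y} := by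
      rintro z ⟨h1, h2⟩
      have h1' := Subgroup.mem_centralizer_singleton_iff.1 h1
      have h2' := Subgroup.mem_centralizer_singleton_iff.1 h2
      exact Subgroup.mem_centralizer_singleton_iff.2 (Commute.mul_right (show Commute z x from h1') (show Commute z y from h2'))
    have : (Subgroup.centralizer {x} ⊓ Subgroup.centralizer {y}).FiniteIndex :=
      ⟨Subgroup.index_inf_ne_zero (hX x hx).1 (ih y hy).1⟩
    have : (Subgroup.centralizer {x * y}).FiniteIndex := Subgroup.finiteIndex_of_le hle
    refine ⟨Subgroup.FiniteIndex.index_ne_zero, ?_⟩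
    refine (Subgroup.index_antitone hle).trans (Subgroup.index_inf_le.trans ?_)
    rw [pow_succ']
    exact Nat.mul_le_mul (hX x hx).2 (ih y hy).2

lemma pow_comm {G : Type} [Group G] {n : ℕ} (a x : G)
    (hx : (Subgroup.centralizer {x}).index ≠ 0 ∧ (Subgroup.centralizer {x}).index ≤ n) :
    Commute (a ^ n.factorial) x := by
  obtain ⟨m, h0, h1, h2⟩ := Subgroup.exists_pow_mem_of_index_ne_zero hx.1 a
  obtain ⟨c, hc⟩ := Nat.dvd_factorial h0 (h1.trans hx.2)
  rw [hc, pow_mul]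
  exact Commute.pow_left (Subgroup.mem_centralizer_singleton_iff.1 h2) c

/-- the finite set of representatives -/
lemma exists_T {G : Type} [Group G] {n : ℕ} (K : Subgroup G)
    (hK : ∀ x ∈ K, (conjugatesOf x).Finite ∧ Nat.card (conjugatesOf x) ≤ n) :
    ∃ T : Finset G, T.card ≤ (n ^ n) ^ n + 1 ∧ (∀ t ∈ T, t ∈ K) ∧
      ∀ N : Subgroup G, N.Normal →
        (∀ h ∈ Subgroup.normalClosure (K : Set G), ∀ t ∈ T, ⁅h, t⁆ ∈ N) →
        ∀ h ∈ Subgroup.normalClosure (K : Set G), ∀ k ∈ K, ⁅h, k⁆ ∈ N := by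
  classical
  set H := Subgroup.normalClosure (K : Set G) with hH
  set X := Group.conjugatesOfSet (K : Set G) with hXdef
  have hHX : H = Subgroup.closure X := rfl
  have hXconj : ∀ x ∈ X, ∃ k ∈ K, IsConj k x := fun x hx => Group.mem_conjugatesOfSet_iff.1 hx
  have hX1 : (1 : G) ∈ X := Group.subset_conjugatesOfSet K.one_mem
  have hXinv : ∀ x ∈ X, x⁻¹ ∈ X := by
    intro x hx
    obtain ⟨k, hk, hkx⟩ := hXconj x hx
    obtain ⟨c, rfl⟩ := isConj_iff.1 hkx
    refine Group.mem_conjugatesOfSet_iff.2 ⟨k⁻¹, K.inv_mem hk, isConj_iff.2 ⟨c, by group⟩⟩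
  have hXc : ∀ x ∈ X,
      (Subgroup.centralizer {x}).index ≠ 0 ∧ (Subgroup.centralizer {x}).index ≤ n := by
    intro x hx
    obtain ⟨k, hk, hkx⟩ := hXconj x hx
    apply cent_index
    rw [← hkx.conjugatesOf_eq]
    exact hK k hk
  let O : G → Set G := fun a => (fun h => h * a * h⁻¹) '' (H : Set G)
  have hOsub : ∀ a, O a ⊆ conjugatesOf a := by
    rintro a _ ⟨h, -, rfl⟩
    exact isConj_iff.2 ⟨h, rfl⟩
  have hOfin : ∀ a ∈ K, (O a).Finite := fun a ha => (hK a ha).1.subset (hOsub a)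
  have hOcard : ∀ a ∈ K, (O a).ncard ≤ n := fun a ha =>
    (Set.ncard_le_ncard (hOsub a) (hK a ha).1).trans (hK a ha).2
  obtain ⟨a, haK, hmax⟩ : ∃ a ∈ K, ∀ c ∈ K, (O c).ncard ≤ (O a).ncard := by
    let V : Set ℕ := (fun a => (O a).ncard) '' (K : Set G)
    have hV : BddAbove V := ⟨n, by rintro _ ⟨a, ha, rfl⟩; exact hOcard a ha⟩
    have hVn : V.Nonempty := ⟨_, 1, K.one_mem, rfl⟩
    obtain ⟨a, ha, hav⟩ := Nat.sSup_mem hVn hV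
    exact ⟨a, ha, fun c hc => by
      change (O a).ncard = sSup V at hav
      rw [hav]; exact le_csSup hV ⟨c, hc, rfl⟩⟩
  have hball := ball_closed X hX1 hXinv a (O a) (hOfin a haK) n (hOcard a haK)
    (fun b hb => ⟨b, hb, rfl⟩)
  have hb : ∀ c : O a, ∃ b ∈ X ^ n, b ∈ H ∧ b * a * b⁻¹ = c := by
    rintro ⟨_, h, hh, rfl⟩
    obtain ⟨b, hb, hbe⟩ := hball h hh
    refine ⟨b, hb, ?_, hbe⟩
    have : ∀ k, X ^ k ⊆ (H : Set G) := by
      intro k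
      induction k with
      | zero => simp [Set.one_subset, H.one_mem]
      | succ k ih =>
        rw [pow_succ']
        rintro _ ⟨x, hx, y, hy, rfl⟩
        exact mul_mem (Subgroup.subset_closure hx) (ih hy)
    exact this n hb
  choose b hbX hbH hbc using hb
  have : Fintype (O a) := (hOfin a haK).fintype
  let U : Subgroup G := ⨅ c : O a, Subgroup.centralizer {b c}
  have hU0 : U.index ≠ 0 := Subgroup.index_iInf_ne_zero fun c => (cent_pow X hXc n _ (hbX c)).1
  have hnpos : 0 < n := by
    have := hXc 1 hX1
    omega
  have hU1 : U.index ≤ (n ^ n) ^ n := by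
    refine (Subgroup.index_iInf_le _).trans ?_
    calc ∏ c : O a, (Subgroup.centralizer {b c}).index ≤ ∏ c : O a, n ^ n :=
          Finset.prod_le_prod' fun c _ => (cent_pow X hXc n _ (hbX c)).2
      _ = (n ^ n) ^ (O a).ncard := by
          rw [Finset.prod_const, Finset.card_univ, ← Nat.card_eq_fintype_card, Nat.card_coe_set_eq]
      _ ≤ _ := Nat.pow_le_pow_right (by positivity) (hOcard a haK)
  have hrel : (U.subgroupOf K).index ≤ U.index := by
    have := Subgroup.relIndex_le_of_le_right (H := U) (K := K) (L := ⊤) le_top (by simpa using hU0)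
    rwa [Subgroup.relIndex_top_right] at this
  have : U.FiniteIndex := ⟨hU0⟩
  have : Fintype (K ⧸ U.subgroupOf K) := Fintype.ofFinite _
  let T0 : Finset G := Finset.univ.image (fun q : K ⧸ U.subgroupOf K => (q.out : G))
  have hT0 : T0.card ≤ (n ^ n) ^ n := by
    refine Finset.card_image_le.trans ?_
    rw [Finset.card_univ, ← Nat.card_eq_fintype_card]
    exact hrel.trans hU1
  refine ⟨insert a T0, (Finset.card_insert_le _ _).trans (by omega), ?_, ?_⟩
  · intro t ht
    rcases Finset.mem_insert.1 ht with rfl | ht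
    · exact haK
    · obtain ⟨q, -, rfl⟩ := Finset.mem_image.1 ht
      exact q.out.2
  intro N hN hT h hh k hk
  -- the elements of K ∩ U
  have hUN : ∀ u ∈ K, u ∈ U → ∀ h ∈ H, ⁅h, u⁆ ∈ N := by
    intro u huK huU h hh
    have hcomm : ∀ c : O a, Commute u (b c) := fun c =>
      Subgroup.mem_centralizer_singleton_iff.1 ((Subgroup.mem_iInf.1 huU) c)
    have hsub : (fun c => u * c) '' (O a) ⊆ O (u * a) := by
      rintro _ ⟨c, hc, rfl⟩
      refine ⟨b ⟨c, hc⟩, hbH _, ?_⟩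
      have h1 := hbc ⟨c, hc⟩
      have h2 := (hcomm ⟨c, hc⟩).eq
      simp only at h1 ⊢
      calc b ⟨c, hc⟩ * (u * a) * (b ⟨c, hc⟩)⁻¹
          = (b ⟨c, hc⟩ * u) * (a * (b ⟨c, hc⟩)⁻¹) := by group
        _ = u * (b ⟨c, hc⟩ * a * (b ⟨c, hc⟩)⁻¹) := by rw [← h2]; group
        _ = u * c := by rw [h1]
    have heq : (fun c => u * c) '' (O a) = O (u * a) := by
      apply Set.eq_of_subset_of_ncard_le hsub _ (hOfin _ (K.mul_mem huK haK))
      rw [Set.ncard_image_of_injective _ (mul_right_injective u)]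
      exact hmax _ (K.mul_mem huK haK)
    have hmem : h * (u * a) * h⁻¹ ∈ O (u * a) := ⟨h, hh, rfl⟩
    rw [← heq] at hmem
    obtain ⟨_, ⟨g, hg, rfl⟩, hge⟩ := hmem
    have e1 : ⁅h, u⁆ = u * (⁅g, a⁆ * ⁅h, a⁆⁻¹) * u⁻¹ := by
      simp only [commutatorElement_def] at *
      have : h * u * h⁻¹ = u * (g * a * g⁻¹) * (h * a * h⁻¹)⁻¹ := by
        rw [hge]; group
      rw [this]; group
    rw [e1]
    exact hN.conj_mem _ (mul_mem (hT g hg a (by simp)) (inv_mem (hT h hh a (by simp)))) _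
  let q : K ⧸ U.subgroupOf K := QuotientGroup.mk ⟨k, hk⟩
  obtain ⟨t, ht⟩ : ∃ t : K, t = q.out := ⟨_, rfl⟩
  have hq : (QuotientGroup.mk t : K ⧸ U.subgroupOf K) = QuotientGroup.mk ⟨k, hk⟩ := by
    rw [ht]; exact QuotientGroup.out_eq' q
  have hu := QuotientGroup.eq.1 hq
  rw [Subgroup.mem_subgroupOf] at hu
  have hu' : (t : G)⁻¹ * k ∈ U := by simpa using hu
  have h1 := hUN _ (K.mul_mem (K.inv_mem t.2) hk) hu' h hh
  have h2 : ⁅h, (t : G)⁆ ∈ N := hT h hh t (Finset.mem_insert_of_mem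
    (Finset.mem_image.2 ⟨q, Finset.mem_univ _, by rw [ht]⟩))
  have : ⁅h, k⁆ = ⁅h, (t : G)⁆ * (t * ⁅h, (t : G)⁻¹ * k⁆ * (t : G)⁻¹) := by
    simp only [commutatorElement_def]; group
  rw [this]
  exact mul_mem h2 (hN.conj_mem _ h1 _)

end Helpers

/-- Main theorem: if `K ≤ G` satisfies `|x^G| ≤ n` for all `x ∈ K`, and
`H = ⟨K^G⟩` is the normal closure of `K`, then `|H'|` is finite and `n`-bounded. -/
theorem stmt_3 :
    ∃ f : ℕ → ℕ, ∀ n : ℕ, 0 < n → ∀ (G : Type) [Group G] (K : Subgroup G),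
      (∀ x ∈ K, (conjugatesOf x).Finite ∧ Nat.card (conjugatesOf x) ≤ n) →
      ∀ (H : Subgroup G), H = Subgroup.normalClosure (K : Set G) →
        Finite (⁅H, H⁆ : Subgroup G) ∧ Nat.card (⁅H, H⁆ : Subgroup G) ≤ f n := by
  classical
  let B : ℕ → ℕ := fun n => ((n ^ n) ^ n + 1) * n
  let k : ℕ → ℕ := fun n => B n * B n
  let E : ℕ → ℕ := fun n => (n * n).factorial * n.factorial
  refine ⟨fun n => (k n + 1) ^ (k n * E n), ?_⟩
  intro n hn G _ K hK H hH
  obtain ⟨T, hTc, hTK, hTN⟩ := exists_T K hK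
  rw [← hH] at hTN
  have hHn : H.Normal := hH ▸ Subgroup.normalClosure_normal
  have hKH : K ≤ H := hH ▸ Subgroup.le_normalClosure
  let W : Set G := ⋃ t ∈ T, conjugatesOf t
  have hWK : ∀ x ∈ W, ∃ t ∈ T, IsConj t x := by
    intro x hx
    simpa [W, conjugatesOf] using hx
  have hWI : ∀ x, (∃ t ∈ T, IsConj t x) → x ∈ W := by
    intro x hx
    simpa [W, conjugatesOf] using hx
  have hWfin : W.Finite := T.finite_toSet.biUnion fun t ht => (hK t (hTK t ht)).1
  have hWcard : W.ncard ≤ B n := by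
    refine (Finset.set_ncard_biUnion_le T _).trans ?_
    refine (Finset.sum_le_card_nsmul T _ n fun t ht => (hK t (hTK t ht)).2).trans ?_
    simpa using Nat.mul_le_mul_right n hTc
  let S : Set G := {s | ∃ x ∈ W, ∃ h ∈ H, s = (h * x * h⁻¹) * x⁻¹}
  have hWconj : ∀ x ∈ W, ∀ g : G, g * x * g⁻¹ ∈ W := by
    intro x hx g
    obtain ⟨t, ht, htx⟩ := hWK x hx
    exact hWI _ ⟨t, ht, htx.trans (isConj_iff.2 ⟨g, rfl⟩)⟩
  have hSW : S ⊆ Set.image (fun p : G × G => p.1 * p.2⁻¹) (W ×ˢ W) := by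
    rintro _ ⟨x, hx, h, hh, rfl⟩
    exact ⟨(h * x * h⁻¹, x), ⟨hWconj x hx h, hx⟩, rfl⟩
  have hWW := hWfin.prod hWfin
  have hSfin : S.Finite := (hWW.image _).subset hSW
  have hScard : S.ncard ≤ k n := by
    refine (Set.ncard_le_ncard hSW (hWW.image _)).trans ((Set.ncard_image_le hWW).trans ?_)
    rw [Set.ncard_prod]
    exact Nat.mul_le_mul hWcard hWcard
  have hSconj : ∀ s ∈ S, ∀ g : G, g * s * g⁻¹ ∈ S := by
    rintro _ ⟨x, hx, h, hh, rfl⟩ g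
    exact ⟨g * x * g⁻¹, hWconj x hx g, g * h * g⁻¹, hHn.conj_mem h hh g, by group⟩
  have hSinv : ∀ s ∈ S, s⁻¹ ∈ S := by
    rintro _ ⟨x, hx, h, hh, rfl⟩
    exact ⟨h * x * h⁻¹, hWconj x hx h, h⁻¹, inv_mem hh, by group⟩
  have hc : ∀ x, (∃ t ∈ K, IsConj t x) →
      (Subgroup.centralizer {x}).index ≠ 0 ∧ (Subgroup.centralizer {x}).index ≤ n := by
    rintro x ⟨t, ht, htx⟩
    apply cent_index
    rw [← htx.conjugatesOf_eq]
    exact hK t ht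
  have hE0 : 0 < E n := Nat.mul_pos (Nat.factorial_pos _) (Nat.factorial_pos _)
  have hcW : ∀ x ∈ W,
      (Subgroup.centralizer {x}).index ≠ 0 ∧ (Subgroup.centralizer {x}).index ≤ n := by
    intro x hx
    obtain ⟨t, ht, htx⟩ := hWK x hx
    exact hc x ⟨t, hTK t ht, htx⟩
  have hSE : ∀ s ∈ S, s ^ E n = 1 := by
    rintro _ ⟨x, hx, h, hh, rfl⟩
    apply order_bound x (h * x * h⁻¹) (hcW x hx) (hcW _ (hWconj x hx h))
    have hle : H ≤ Subgroup.centralizer {x ^ n.factorial} := by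
      rw [hH]
      change Subgroup.closure _ ≤ _
      rw [Subgroup.closure_le]
      intro z hz
      exact Subgroup.mem_centralizer_singleton_iff.2
        (pow_comm x z (hc z (Group.mem_conjugatesOfSet_iff.1 hz))).symm
    have := Subgroup.mem_centralizer_singleton_iff.1 (hle hh)
    rw [conj_pow, this]; group
  obtain ⟨hNfin, hNcard⟩ := dietzmann S hSfin (k n) hScard hSconj hSinv (E n) hE0 hSE
  set N := Subgroup.closure S with hNdef
  have hNn : N.Normal := by
    refine ⟨fun z hz g => ?_⟩
    induction hz using Subgroup.closure_induction with
    | mem s hs => exact Subgroup.subset_closure (hSconj s hs g)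
    | one => simp
    | mul x y _ _ hx hy => rw [← conj_mul]; exact mul_mem hx hy
    | inv x _ hx => rw [← conj_inv]; exact inv_mem hx
  have hHK := hTN N hNn fun h hh t ht => Subgroup.subset_closure
    ⟨t, hWI t ⟨t, ht, IsConj.refl t⟩, h, hh, by rw [commutatorElement_def]⟩
  have hHH : ⁅H, H⁆ ≤ N := by
    have h1 : H ≤ Subgroup.comap (QuotientGroup.mk' N)
        (Subgroup.centralizer (QuotientGroup.mk' N '' (H : Set G))) := by
      have : Subgroup.Normal (Subgroup.comap (QuotientGroup.mk' N)
        (Subgroup.centralizer (QuotientGroup.mk' N '' (H : Set G)))) := by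
        have : (Subgroup.map (QuotientGroup.mk' N) H).Normal :=
          hHn.map _ (QuotientGroup.mk'_surjective N)
        have : (Subgroup.centralizer
            ((Subgroup.map (QuotientGroup.mk' N) H : Subgroup (G ⧸ N)) : Set (G ⧸ N))).Normal :=
          inferInstance
        rw [Subgroup.coe_map] at this
        exact this.comap _
      conv_lhs => rw [hH]
      apply Subgroup.normalClosure_le_normal
      intro x hx
      rw [SetLike.mem_coe, Subgroup.mem_comap, Subgroup.mem_centralizer_iff]
      rintro _ ⟨h, hh, rfl⟩
      rw [← commutatorElement_eq_one_iff_mul_comm, ← map_commutatorElement,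
        QuotientGroup.mk'_apply, QuotientGroup.eq_one_iff]
      exact hHK h hh x hx
    rw [Subgroup.commutator_le]
    intro g hg h hh
    have := h1 hh
    rw [Subgroup.mem_comap, Subgroup.mem_centralizer_iff] at this
    have := this _ ⟨g, hg, rfl⟩
    rw [← commutatorElement_eq_one_iff_mul_comm, ← map_commutatorElement,
        QuotientGroup.mk'_apply, QuotientGroup.eq_one_iff] at this
    exact this
  have hfin : ((⁅H, H⁆ : Subgroup G) : Set G).Finite := hNfin.subset hHH
  exact ⟨hfin.to_subtype, (Set.ncard_le_ncard (s := ((⁅H, H⁆ : Subgroup G) : Set G)) hHH hNfin).trans hNcard⟩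
end

section
/- Let G be a group having a subgroup K such that |x^G| ≤ n for all x ∈ K. Then there exists a finite normal subgroup T of G (of n-bounded order) such that in G/T, the image of the normal closure ⟨K^G⟩ of K is abelian... equivalently: the derived subgroup of ⟨K^G⟩ is a finite normal subgroup of G of n-bounded order. -/
open scoped commutatorElement

def orbS {G : Type} [Group G] (L : Subgroup G) (a : G) : Set G :=
  (fun g => g * a * g⁻¹) '' (L : Set G)

def goodC {G : Type} [Group G] (n : ℕ) (x : G) : Prop :=
  (conjugatesOf x).Finite ∧ Nat.card (conjugatesOf x) ≤ n

lemma orbS_subset {G : Type} [Group G] (L : Subgroup G) (a : G) : orbS L a ⊆ conjugatesOf a := by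
  rintro _ ⟨g, -, rfl⟩
  exact isConj_iff.2 ⟨g, rfl⟩

lemma orbS_mono {G : Type} [Group G] {L M : Subgroup G} (h : L ≤ M) (a : G) :
    orbS L a ⊆ orbS M a := Set.image_mono h

lemma orbS_finite {G : Type} [Group G] (L : Subgroup G) {a : G} {n : ℕ} (h : goodC n a) :
    (orbS L a).Finite := h.1.subset (orbS_subset L a)

lemma orbS_card {G : Type} [Group G] (L : Subgroup G) {a : G} {n : ℕ} (h : goodC n a) :
    (orbS L a).ncard ≤ n := by
  refine (Set.ncard_le_ncard (orbS_subset L a) h.1).trans ?_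
  exact h.2

lemma goodC_conj {G : Type} [Group G] {a b : G} {n : ℕ} (h : goodC n a) (hab : IsConj a b) :
    goodC n b := by
  unfold goodC
  rw [← hab.conjugatesOf_eq]
  exact h

lemma exists_F {G : Type} [Group G] (X : Set G) (hinv : ∀ x ∈ X, x⁻¹ ∈ X) (a : G) (n : ℕ)
    (ha : goodC n a) : ∃ F : Finset G, (F : Set G) ⊆ X ∧ F.card ≤ n ∧
      orbS (Subgroup.closure X) a ⊆ orbS (Subgroup.closure (F : Set G)) a := by
  classical
  let P : ℕ → Prop := fun m => ∃ F : Finset G, (F : Set G) ⊆ X ∧ F.card = m ∧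
    m + 1 ≤ (orbS (Subgroup.closure (F : Set G)) a).ncard
  have hP0 : P 0 := by
    refine ⟨∅, by simp, rfl, ?_⟩
    rw [zero_add, Nat.succ_le_iff, Set.ncard_pos (orbS_finite _ ha)]
    exact ⟨_, 1, Subgroup.one_mem _, rfl⟩
  have hPn : ∀ m, P m → m + 1 ≤ n := by
    rintro m ⟨F, -, -, h⟩
    exact h.trans (orbS_card _ ha)
  obtain ⟨m, hm, hm'⟩ : ∃ m, P m ∧ ¬ P (m+1) := by
    by_contra! hc
    have : ∀ m, P m := fun m => Nat.rec hP0 hc m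
    have := hPn n (this n)
    omega
  have hmn := hPn m hm
  obtain ⟨F, hFX, hFc, hF⟩ := hm
  refine ⟨F, hFX, by omega, ?_⟩
  set S := orbS (Subgroup.closure (F : Set G)) a with hS
  have key : ∀ x ∈ X, ∀ s ∈ S, x * s * x⁻¹ ∈ S := by
    intro x hx s hs
    by_contra hcon
    have hxF : x ∉ F := by
      intro hxF
      apply hcon
      obtain ⟨g, hg, rfl⟩ := hs
      exact ⟨x * g, Subgroup.mul_mem _ (Subgroup.subset_closure hxF) hg, by simp [mul_assoc]⟩
    apply hm'
    refine ⟨insert x F, ?_, by rw [Finset.card_insert_of_notMem hxF, hFc], ?_⟩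
    · rw [Finset.coe_insert]; exact Set.insert_subset hx hFX
    have hsub : Subgroup.closure (F : Set G) ≤ Subgroup.closure ((insert x F : Finset G) : Set G) :=
      Subgroup.closure_mono (by simp)
    have : S.ncard < (orbS (Subgroup.closure ((insert x F : Finset G) : Set G)) a).ncard := by
      apply Set.ncard_lt_ncard _ (orbS_finite _ ha)
      refine (Set.ssubset_iff_of_subset (orbS_mono hsub a)).2 ⟨x * s * x⁻¹, ?_, hcon⟩
      obtain ⟨g, hg, rfl⟩ := hs
      exact ⟨x * g, Subgroup.mul_mem _ (Subgroup.subset_closure (by simp)) (hsub hg),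
        by simp [mul_assoc]⟩
    omega
  have key2 : ∀ g ∈ Subgroup.closure X, (∀ s ∈ S, g * s * g⁻¹ ∈ S) ∧ (∀ s ∈ S, g⁻¹ * s * g ∈ S) := by
    intro g hg
    induction hg using Subgroup.closure_induction with
    | mem x hx => exact ⟨key x hx, fun s hs => by simpa using key x⁻¹ (hinv x hx) s hs⟩
    | one => simp
    | mul x y _ _ hx hy =>
      refine ⟨fun s hs => ?_, fun s hs => ?_⟩
      · simpa [mul_assoc] using hx.1 _ (hy.1 s hs)
      · simpa [mul_assoc] using hy.2 _ (hx.2 s hs)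
    | inv x _ hx => exact ⟨fun s hs => by simpa using hx.2 s hs, fun s hs => by simpa using hx.1 s hs⟩
  rintro _ ⟨g, hg, rfl⟩
  exact (key2 g hg).1 a ⟨1, Subgroup.one_mem _, by simp⟩

lemma index_centralizer_goodC {G : Type} [Group G] {x : G} {n : ℕ} (h : goodC n x) :
    (Subgroup.centralizer {x}).index ≠ 0 ∧ (Subgroup.centralizer {x}).index ≤ n := by
  have e : (Subgroup.centralizer {x}).index = Nat.card (conjugatesOf x) := by
    have h1 := MulAction.index_stabilizer (ConjAct G) x
    rw [ConjAct.orbit_eq_carrier_conjClasses] at h1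
    have h2 : (ConjClasses.mk x).carrier = conjugatesOf x := rfl
    rw [h2] at h1
    rw [← Nat.card_coe_set_eq] at h1
    rw [← h1, ConjAct.stabilizer_eq_centralizer]
    rfl
  rw [e]
  refine ⟨?_, h.2⟩
  have := h.1.to_subtype
  have : Nonempty (conjugatesOf x) := ⟨⟨x, mem_conjugatesOf_self⟩⟩
  exact Nat.card_pos.ne'

lemma index_centralizer_finset {G : Type} [Group G] (E : Finset G) {n : ℕ}
    (h : ∀ x ∈ E, goodC n x) :
    (Subgroup.centralizer (E : Set G)).index ≠ 0 ∧
      (Subgroup.centralizer (E : Set G)).index ≤ n ^ E.card := by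
  have e : Subgroup.centralizer (E : Set G) = ⨅ i : {x // x ∈ E}, Subgroup.centralizer ({(i : G)} : Set G) := by
    ext g
    simp [Subgroup.mem_iInf, Subgroup.mem_centralizer_iff]
  rw [e]
  refine ⟨Subgroup.index_iInf_ne_zero fun (i : {x // x ∈ E}) => (index_centralizer_goodC (h i i.2)).1, ?_⟩
  refine (Subgroup.index_iInf_le _).trans ?_
  refine (Finset.prod_le_pow_card _ _ n fun (i : {x // x ∈ E}) _ => (index_centralizer_goodC (h i i.2)).2).trans ?_
  simp

lemma bound_mono {a b : ℕ} (ha : 1 ≤ a) (h : a ≤ b) :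
    Subgroup.cardCommutatorBound a ≤ Subgroup.cardCommutatorBound b := by
  unfold Subgroup.cardCommutatorBound
  have hb : 1 ≤ b := ha.trans h
  have h1 : a ^ (2 * a) ≤ b ^ (2 * b) :=
    (Nat.pow_le_pow_left h _).trans (Nat.pow_le_pow_right hb (by omega))
  have h2 : a ^ (2 * a + 1) ≤ b ^ (2 * b + 1) :=
    (Nat.pow_le_pow_left h _).trans (Nat.pow_le_pow_right hb (by omega))
  exact (Nat.pow_le_pow_left h1 _).trans
    (Nat.pow_le_pow_right (Nat.pow_pos hb) (by omega))

lemma schur_bound {G : Type} [Group G] (T : Subgroup G) (c : ℕ)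
    (h0 : (Subgroup.centralizer (T : Set G)).index ≠ 0)
    (hc : (Subgroup.centralizer (T : Set G)).index ≤ c) :
    Finite (⁅T, T⁆ : Subgroup G) ∧
      Nat.card (⁅T, T⁆ : Subgroup G) ≤ Subgroup.cardCommutatorBound (c * c) := by
  set C := Subgroup.centralizer (T : Set G) with hC
  have hfin : Finite (G ⧸ C) := Nat.finite_of_card_ne_zero h0
  let ψ : commutatorSet T → (G ⧸ C) × (G ⧸ C) := fun z =>
    (((z.2.choose : T) : G), ((z.2.choose_spec.choose : T) : G))
  have hψ : Function.Injective ψ := by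
    intro z w hzw
    have hz := z.2.choose_spec.choose_spec
    have hw := w.2.choose_spec.choose_spec
    have h1 := congrArg Prod.fst hzw
    have h2 := congrArg Prod.snd hzw
    simp only [ψ] at h1 h2
    rw [QuotientGroup.eq] at h1 h2
    generalize z.2.choose_spec.choose = z2 at *
    generalize w.2.choose_spec.choose = w2 at *
    generalize z.2.choose = z1 at *
    generalize w.2.choose = w1 at *
    apply Subtype.ext
    rw [← hz, ← hw]
    apply Subtype.ext
    rw [Subgroup.mem_centralizer_iff] at h1 h2
    obtain ⟨p, hp⟩ : ∃ p : G, p = (z1 : G)⁻¹ * w1 := ⟨_, rfl⟩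
    obtain ⟨q, hq⟩ : ∃ q : G, q = (z2 : G)⁻¹ * w2 := ⟨_, rfl⟩
    rw [← hp] at h1
    rw [← hq] at h2
    have e1 : (w1 : G) = z1 * p := by rw [hp]; group
    have e2 : (w2 : G) = z2 * q := by rw [hq]; group
    have a1 : (z2 : G) * p = p * z2 := h1 z2 z2.2
    have a2 : (z1 : G) * q = q * z1 := h2 z1 z1.2
    have hqT : q ∈ T := by rw [hq]; exact T.mul_mem (T.inv_mem z2.2) w2.2
    have a3 : q * p = p * q := h1 q hqT
    rw [commutatorElement_def, commutatorElement_def]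
    push_cast
    rw [e1, e2]
    symm
    calc (z1 : G) * p * (z2 * q) * (z1 * p)⁻¹ * (z2 * q)⁻¹
        = z1 * (p * z2) * q * p⁻¹ * (z1 : G)⁻¹ * q⁻¹ * (z2 : G)⁻¹ := by group
      _ = z1 * z2 * (p * q) * p⁻¹ * (z1 : G)⁻¹ * q⁻¹ * (z2 : G)⁻¹ := by rw [← a1]; group
      _ = z1 * z2 * (q * (z1 : G)⁻¹) * q⁻¹ * (z2 : G)⁻¹ := by rw [← a3]; group
      _ = z1 * z2 * ((z1 : G)⁻¹ * (z1 * q) * (z1 : G)⁻¹) * q⁻¹ * (z2 : G)⁻¹ := by group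
      _ = z1 * z2 * (z1 : G)⁻¹ * (z2 : G)⁻¹ := by rw [a2]; group
  have hfc : Finite (commutatorSet T) := Finite.of_injective ψ hψ
  have hle : Nat.card (commutatorSet T) ≤ c * c := by
    refine (Nat.card_le_card_of_injective ψ hψ).trans ?_
    rw [Nat.card_prod]
    exact Nat.mul_le_mul hc hc
  have hpos : 1 ≤ Nat.card (commutatorSet T) := Finite.card_pos
  have hb := (Subgroup.card_commutator_le_of_finite_commutatorSet T).trans (bound_mono hpos hle)
  have he := T.map_subtype_commutator
  let e := (_root_.commutator T).equivMapOfInjective T.subtype T.subtype_injective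
  rw [he] at e
  exact ⟨Finite.of_equiv _ e.toEquiv, (Nat.card_congr e.toEquiv).symm.trans_le hb⟩

lemma normalClosure_bound {G : Type} [Group G] (E : Finset G) {n m : ℕ} (hn : 1 ≤ n)
    (h : ∀ x ∈ E, goodC n x) (hm : E.card ≤ m) (T : Subgroup G)
    (hT : T = Subgroup.normalClosure (E : Set G)) :
    Finite (⁅T, T⁆ : Subgroup G) ∧ Nat.card (⁅T, T⁆ : Subgroup G) ≤
      Subgroup.cardCommutatorBound (n ^ (m * n) * n ^ (m * n)) := by
  classical
  let S : G → Finset G := fun x => if hx : (conjugatesOf x).Finite then hx.toFinset else ∅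
  let E' := E.biUnion S
  have hSE : ∀ x ∈ E, (S x : Set G) = conjugatesOf x := by
    intro x hx
    simp [S, (h x hx).1]
  have hE' : (E' : Set G) = Group.conjugatesOfSet (E : Set G) := by
    simp only [E', Finset.coe_biUnion, Group.conjugatesOfSet]
    exact Set.iUnion₂_congr hSE
  have hcard : E'.card ≤ m * n := by
    refine (Finset.card_biUnion_le_card_mul _ _ n fun x hx => ?_).trans (Nat.mul_le_mul_right _ hm)
    have := (h x hx).2
    rwa [← hSE x hx, Nat.card_coe_set_eq, Set.ncard_coe_finset] at this
  have hgood : ∀ x ∈ E', goodC n x := by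
    intro x hx
    have : x ∈ (E' : Set G) := hx
    rw [hE', Group.mem_conjugatesOfSet_iff] at this
    obtain ⟨y, hy, hyx⟩ := this
    exact goodC_conj (h y hy) hyx
  have hc : Subgroup.centralizer (T : Set G) = Subgroup.centralizer (E' : Set G) := by
    rw [hT, Subgroup.normalClosure, Subgroup.centralizer_closure, hE']
  have := index_centralizer_finset E' hgood
  rw [← hc] at this
  exact schur_bound T _ this.1 (this.2.trans (Nat.pow_le_pow_right hn hcard))

lemma exists_reps {G : Type} [Group G] (K U : Subgroup G) (h0 : U.index ≠ 0) :
    ∃ R : Finset G, (R : Set G) ⊆ K ∧ R.card ≤ U.index ∧ ∀ x ∈ K, ∃ r ∈ R, r⁻¹ * x ∈ U := by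
  classical
  have hfin : Finite (G ⧸ U) := Nat.finite_of_card_ne_zero h0
  have := Fintype.ofFinite (G ⧸ U)
  let ρ : G ⧸ U → G := fun q => if hq : ∃ k ∈ K, (k : G ⧸ U) = q then hq.choose else 1
  refine ⟨Finset.univ.image ρ, ?_, ?_, ?_⟩
  · intro y hy
    simp only [Finset.coe_image, Finset.coe_univ, Set.image_univ, Set.mem_range] at hy
    obtain ⟨q, rfl⟩ := hy
    simp only [ρ]
    split_ifs with hq
    · exact hq.choose_spec.1
    · exact K.one_mem
  · refine Finset.card_image_le.trans ?_
    rw [Finset.card_univ, Subgroup.index, Nat.card_eq_fintype_card]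
  · intro x hx
    refine ⟨ρ x, Finset.mem_image_of_mem _ (Finset.mem_univ _), ?_⟩
    have hq : ∃ k ∈ K, (k : G ⧸ U) = (x : G ⧸ U) := ⟨x, hx, rfl⟩
    simp only [ρ, dif_pos hq]
    exact QuotientGroup.eq.1 hq.choose_spec.2

lemma exists_max {G : Type} (K : Set G) (o : G) (ho : o ∈ K) (φ : G → ℕ) (n : ℕ)
    (h : ∀ x ∈ K, φ x ≤ n) : ∃ a ∈ K, ∀ x ∈ K, φ x ≤ φ a := by
  have hb : BddAbove (φ '' K) := ⟨n, by rintro _ ⟨x, hx, rfl⟩; exact h x hx⟩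
  obtain ⟨a, ha, hae⟩ := Nat.sSup_mem (Set.Nonempty.image φ ⟨o, ho⟩) hb
  exact ⟨a, ha, fun x hx => by rw [hae]; exact le_csSup hb ⟨x, hx, rfl⟩⟩

lemma comm_of_orb {G : Type} [Group G] (H T : Subgroup G) (k : G) (hk : k ∈ T)
    (ho : orbS H k ⊆ orbS T k) : ∀ h ∈ H, ⁅h, k⁆ ∈ ⁅T, T⁆ := by
  intro h hh
  obtain ⟨t, ht, hte⟩ := ho ⟨h, hh, rfl⟩
  simp only at hte
  rw [commutatorElement_def, ← hte, ← commutatorElement_def]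
  exact Subgroup.commutator_mem_commutator ht hk


/-- If `|x^G| ≤ n` for all `x` in a subgroup `K`, then the derived subgroup of the
normal closure `H = ⟨K^G⟩` is a finite normal subgroup of `G` of `n`-bounded order;
equivalently the image of `H` in `G` modulo it is abelian. -/
theorem stmt_4 :
    ∃ f : ℕ → ℕ, ∀ n : ℕ, ∀ (G : Type) [Group G] (K : Subgroup G),
      (∀ x ∈ K, (conjugatesOf x).Finite ∧ Nat.card (conjugatesOf x) ≤ n) →
      ∀ (H : Subgroup G), H = Subgroup.normalClosure (K : Set G) →
        (⁅H, H⁆ : Subgroup G).Normal ∧ Finite (⁅H, H⁆ : Subgroup G) ∧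
          Nat.card (⁅H, H⁆ : Subgroup G) ≤ f n := by
  classical
  let m : ℕ → ℕ := fun n => (n + 1) + n ^ (n + 1) * (n + 1)
  refine ⟨fun n => Subgroup.cardCommutatorBound (n ^ (m n * n) * n ^ (m n * n)), ?_⟩
  intro n G _ K hK H hH
  have hHn : H.Normal := by rw [hH]; infer_instance
  refine ⟨inferInstance, ?_⟩
  have hKg : ∀ x ∈ K, goodC n x := hK
  have hn : 1 ≤ n := by
    have := index_centralizer_goodC (hKg 1 K.one_mem)
    omega
  let X := Group.conjugatesOfSet (K : Set G)
  have hHX : H = Subgroup.closure X := hH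
  have hXinv : ∀ x ∈ X, x⁻¹ ∈ X := by
    intro x hx
    obtain ⟨k, hk, hkx⟩ := Group.mem_conjugatesOfSet_iff.1 hx
    obtain ⟨c, rfl⟩ := isConj_iff.1 hkx
    exact Group.mem_conjugatesOfSet_iff.2
      ⟨k⁻¹, K.inv_mem hk, isConj_iff.2 ⟨c, by group⟩⟩
  have hXg : ∀ x ∈ X, goodC n x := by
    intro x hx
    obtain ⟨k, hk, hkx⟩ := Group.mem_conjugatesOfSet_iff.1 hx
    exact goodC_conj (hKg k hk) hkx
  have hKX : (K : Set G) ⊆ X := Group.subset_conjugatesOfSet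
  have hF : ∀ k : G, ∃ F : Finset G, k ∈ K → (F : Set G) ⊆ X ∧ F.card ≤ n ∧
      orbS H k ⊆ orbS (Subgroup.closure (F : Set G)) k := by
    intro k
    by_cases hk : k ∈ K
    · obtain ⟨F, hF⟩ := exists_F X hXinv k n (hKg k hk)
      exact ⟨F, fun _ => by rw [hHX]; exact hF⟩
    · exact ⟨∅, fun h => absurd h hk⟩
  choose F hF using hF
  obtain ⟨a, haK, hamax⟩ := exists_max (K : Set G) 1 K.one_mem (fun x => (orbS H x).ncard) n
    (fun x hx => orbS_card H (hKg x hx))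
  let I : G → Finset G := fun k => insert k (F k)
  have hIX : ∀ k ∈ K, ∀ x ∈ I k, x ∈ X := by
    intro k hk x hx
    rcases Finset.mem_insert.1 hx with rfl | hx
    · exact hKX hk
    · exact (hF k hk).1 hx
  have hIc : ∀ k ∈ K, (I k).card ≤ n + 1 := fun k hk =>
    (Finset.card_insert_le _ _).trans (by have := (hF k hk).2.1; omega)
  let U := Subgroup.centralizer (I a : Set G)
  have hU : U.index ≠ 0 ∧ U.index ≤ n ^ (I a).card :=
    index_centralizer_finset (I a) (fun x hx => hXg x (hIX a haK x hx))
  have hU2 : U.index ≤ n ^ (n + 1) := hU.2.trans (Nat.pow_le_pow_right hn (hIc a haK))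
  obtain ⟨R, hRK, hRc, hR⟩ := exists_reps K U hU.1
  let E := I a ∪ R.biUnion I
  have hEc : E.card ≤ m n := by
    refine (Finset.card_union_le _ _).trans (Nat.add_le_add (hIc a haK) ?_)
    refine (Finset.card_biUnion_le_card_mul _ _ (n + 1) fun x hx => hIc x (hRK hx)).trans ?_
    exact Nat.mul_le_mul_right _ (hRc.trans hU2)
  have hEg : ∀ x ∈ E, goodC n x := by
    intro x hx
    rcases Finset.mem_union.1 hx with hx | hx
    · exact hXg x (hIX a haK x hx)
    · obtain ⟨r, hr, hx⟩ := Finset.mem_biUnion.1 hx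
      exact hXg x (hIX r (hRK hr) x hx)
  obtain ⟨T, hT⟩ : ∃ T, T = Subgroup.normalClosure (E : Set G) := ⟨_, rfl⟩
  have hTn : T.Normal := by rw [hT]; infer_instance
  have hET : ∀ x ∈ E, x ∈ T := fun x hx => by rw [hT]; exact Subgroup.subset_normalClosure hx
  obtain ⟨hfin, hcard⟩ := normalClosure_bound E hn hEg hEc T hT
  obtain ⟨N, hN⟩ : ∃ N : Subgroup G, N = ⁅T, T⁆ := ⟨_, rfl⟩
  have hNn : N.Normal := by rw [hN]; infer_instance
  have hcomm : ∀ k ∈ K, (∀ x ∈ I k, x ∈ T) → ∀ h ∈ H, ⁅h, k⁆ ∈ N := by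
    intro k hk hkT
    rw [hN]
    refine comm_of_orb H T k (hkT k (Finset.mem_insert_self _ _)) ((hF k hk).2.2.trans ?_)
    refine orbS_mono ((Subgroup.closure_le _).2 fun x hx => ?_) k
    exact hkT x (Finset.mem_insert_of_mem hx)
  have hca := hcomm a haK fun x hx => hET x (Finset.mem_union_left _ hx)
  have hcR : ∀ r ∈ R, ∀ h ∈ H, ⁅h, r⁆ ∈ N := fun r hr => hcomm r (hRK hr) fun x hx =>
    hET x (Finset.mem_union_right _ (Finset.mem_biUnion.2 ⟨r, hr, hx⟩))
  have hFH : Subgroup.closure (F a : Set G) ≤ H := by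
    rw [hHX]; exact Subgroup.closure_mono (hF a haK).1
  have hcU : ∀ u ∈ K, u ∈ U → ∀ h ∈ H, ⁅h, u⁆ ∈ N := by
    intro u huK huU h hh
    have huF : ∀ b ∈ Subgroup.closure (F a : Set G), b * u = u * b := by
      intro b hb
      have : Subgroup.closure (F a : Set G) ≤ Subgroup.centralizer {u} := by
        rw [Subgroup.closure_le]
        intro y hy
        have := Subgroup.mem_centralizer_iff.1 huU y (Finset.mem_insert_of_mem hy)
        simp only [SetLike.mem_coe, Subgroup.mem_centralizer_iff, Set.mem_singleton_iff, forall_eq]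
        exact this.symm
      have := Subgroup.mem_centralizer_iff.1 (this hb) u rfl
      exact this.symm
    have hconj : ∀ b ∈ Subgroup.closure (F a : Set G),
        b * (u * a) * b⁻¹ = u * (b * a * b⁻¹) := by
      intro b hb
      rw [← mul_assoc b u a, huF b hb]
      group
    have hsub : (fun y => u * y) '' orbS H a ⊆ orbS H (u * a) := by
      rintro _ ⟨y, hy, rfl⟩
      obtain ⟨b, hb, rfl⟩ := (hF a haK).2.2 hy
      exact ⟨b, hFH hb, hconj b hb⟩
    have huaK : u * a ∈ K := K.mul_mem huK haK
    have heq : (fun y => u * y) '' orbS H a = orbS H (u * a) := by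
      refine Set.eq_of_subset_of_ncard_le hsub ?_ (orbS_finite H (hKg _ huaK))
      rw [Set.ncard_image_of_injective _ (mul_right_injective u)]
      exact hamax _ huaK
    have hmem : h * (u * a) * h⁻¹ ∈ orbS H (u * a) := ⟨h, hh, rfl⟩
    rw [← heq] at hmem
    obtain ⟨_, ⟨b, hb, rfl⟩, hbe⟩ := hmem
    simp only at hbe
    have e : ⁅h, u⁆ = u * (⁅b, a⁆ * ⁅h, a⁆⁻¹) * u⁻¹ := by
      have : h * u * h⁻¹ = u * (b * a * b⁻¹) * (h * a * h⁻¹)⁻¹ := by rw [hbe]; group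
      simp only [commutatorElement_def]
      rw [this]; group
    rw [e]
    exact hNn.conj_mem _ (N.mul_mem (hca b hb) (N.inv_mem (hca h hh))) u
  have hprod : ∀ x y : G, (∀ h ∈ H, ⁅h, x⁆ ∈ N) → (∀ h ∈ H, ⁅h, y⁆ ∈ N) →
      ∀ h ∈ H, ⁅h, x * y⁆ ∈ N := by
    intro x y hx hy h hh
    have : ⁅h, x * y⁆ = ⁅h, x⁆ * (x * ⁅h, y⁆ * x⁻¹) := by
      simp only [commutatorElement_def]; group
    rw [this]
    exact N.mul_mem (hx h hh) (hNn.conj_mem _ (hy h hh) x)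
  have hcK : ∀ x ∈ K, ∀ h ∈ H, ⁅h, x⁆ ∈ N := by
    intro x hx
    obtain ⟨r, hr, hru⟩ := hR x hx
    have := hprod r (r⁻¹ * x) (hcR r hr)
      (hcU _ (K.mul_mem (K.inv_mem (hRK hr)) hx) hru)
    simpa using this
  have hcX : ∀ x ∈ X, ∀ h ∈ H, ⁅h, x⁆ ∈ N := by
    intro x hx h hh
    obtain ⟨k, hk, hkx⟩ := Group.mem_conjugatesOfSet_iff.1 hx
    obtain ⟨c, rfl⟩ := isConj_iff.1 hkx
    have h1 := hcK k hk (c⁻¹ * h * c) (by simpa using hHn.conj_mem h hh c⁻¹)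
    have : ⁅h, c * k * c⁻¹⁆ = c * ⁅c⁻¹ * h * c, k⁆ * c⁻¹ := by
      simp only [commutatorElement_def]; group
    rw [this]
    exact hNn.conj_mem _ h1 c
  have hcH : ∀ x ∈ H, ∀ h ∈ H, ⁅h, x⁆ ∈ N := by
    intro x hx
    rw [hHX] at hx
    induction hx using Subgroup.closure_induction with
    | mem x hx => exact hcX x hx
    | one => intro h _; simp [N.one_mem]
    | mul x y _ _ hx hy => exact hprod x y hx hy
    | inv x _ hx =>
      intro h hh
      have : ⁅h, x⁻¹⁆ = x⁻¹ * ⁅h, x⁆⁻¹ * (x⁻¹)⁻¹ := by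
        simp only [commutatorElement_def]; group
      rw [this]
      exact hNn.conj_mem _ (N.inv_mem (hx h hh)) _
  have hle : ⁅H, H⁆ ≤ ⁅T, T⁆ := by
    rw [← hN, Subgroup.commutator_le]
    intro h hh x hx
    exact hcH x hx h hh
  exact ⟨Finite.of_injective _ (Subgroup.inclusion_injective hle),
    (Nat.card_le_card_of_injective _ (Subgroup.inclusion_injective hle)).trans hcard⟩
end

section
/- Let G be a finite group admitting an automorphism φ of order 2 with gcd(|G|, 2) = 1, and suppose |x^G| ≤ n for each x ∈ C_G(φ). Then the second derived subgroup G'' of G has order bounded in terms of n. -/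
namespace BFC
open Subgroup
open scoped Pointwise

/-- Powers. -/
theorem pow_fact_commute {G : Type} [Group G] [Finite G] (n : ℕ) (a x : G)
    (hx : (conjugatesOf x).ncard ≤ n) : Commute (a ^ n.factorial) x := by
  have hmaps : ∀ i ∈ Finset.range (n+1), a ^ i * x * (a ^ i)⁻¹ ∈ (Set.toFinite (conjugatesOf x)).toFinset := by
    intro i _
    simp only [Set.Finite.mem_toFinset, conjugatesOf, Set.mem_ofPred_eq]
    exact isConj_iff.2 ⟨a ^ i, rfl⟩
  have hcard : (Set.toFinite (conjugatesOf x)).toFinset.card < (Finset.range (n+1)).card := by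
    rw [← Set.ncard_eq_toFinset_card]
    simp; omega
  obtain ⟨i, hi, j, hj, hij, he⟩ := Finset.exists_ne_map_eq_of_card_lt_of_maps_to hcard hmaps
  have key : ∀ i j : ℕ, i < j → j < n + 1 → a ^ i * x * (a ^ i)⁻¹ = a ^ j * x * (a ^ j)⁻¹ →
      Commute (a ^ n.factorial) x := by
    intro i j hij hj he
    have h1 : Commute (a ^ (j - i)) x := by
      have : j = i + (j - i) := by omega
      rw [this, pow_add] at he
      have h2 : a ^ (j-i) * x * (a ^ (j-i))⁻¹ = x := by
        have := congrArg (fun y => (a^i)⁻¹ * y * a ^ i) he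
        simp only [mul_inv_rev] at this
        group at this ⊢
        exact this.symm
      exact mul_inv_eq_iff_eq_mul.1 h2
    obtain ⟨k, hk⟩ : (j - i) ∣ n.factorial := Nat.dvd_factorial (by omega) (by omega)
    rw [hk, pow_mul]
    exact h1.pow_left k
  simp only [Finset.mem_range] at hi hj
  rcases lt_or_gt_of_ne hij with h | h
  · exact key i j h hj he
  · exact key j i h hi he.symm

theorem card_sup_le {G : Type} [Group G] [Finite G] (A B : Subgroup G) [B.Normal] :
    Nat.card (A ⊔ B : Subgroup G) ≤ Nat.card A * Nat.card B := by
  have h : ((A ⊔ B : Subgroup G) : Set G) = (A : Set G) * B := Subgroup.mul_normal A B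
  calc Nat.card (A ⊔ B : Subgroup G) = Nat.card ((A : Set G) * (B : Set G) : Set G) := by rw [← h]; rfl
    _ ≤ _ := Set.natCard_mul_le

theorem card_biSup_le {G ι : Type} [Group G] [Finite G] (s : Finset ι) (E : ι → Subgroup G)
    (hE : ∀ i ∈ s, (E i).Normal) (c : ℕ) (hc : ∀ i ∈ s, Nat.card (E i) ≤ c) :
    Nat.card (s.sup E : Subgroup G) ≤ c ^ s.card ∧ (s.sup E).Normal := by
  classical
  induction s using Finset.induction_on with
  | empty => simp
  | insert a s ha ih =>
    obtain ⟨h1, h2⟩ := ih (fun i hi => hE i (by simp [hi])) (fun i hi => hc i (by simp [hi]))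
    have := hE a (by simp)
    rw [Finset.sup_insert, Finset.card_insert_of_notMem ha, pow_succ']
    refine ⟨(card_sup_le _ _).trans (Nat.mul_le_mul (hc a (by simp)) h1), inferInstance⟩

theorem card_closure_le {A : Type} [CommGroup A] [Finite A] (s : Finset A) (N : ℕ) (hN : 0 < N)
    (hs : ∀ x ∈ s, x ^ N = 1) : Nat.card (closure (s : Set A)) ≤ N ^ s.card := by
  have h := (card_biSup_le s (fun x => zpowers x) (fun _ _ => inferInstance) N ?_).1
  · refine le_trans (Nat.card_mono (Set.toFinite _) ?_) h
    rw [SetLike.coe_subset_coe, closure_le]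
    intro x hx
    exact (Finset.le_sup (f := fun x => zpowers x) hx) (mem_zpowers x)
  · intro x hx
    rw [Nat.card_zpowers]
    exact orderOf_le_of_pow_eq_one hN (hs x hx)

theorem ncard_range_le_of_factors {α β γ : Type} [Finite α] (f : α → β) (g : α → γ)
    (h : ∀ x y, f x = f y → g x = g y) : (Set.range g).ncard ≤ (Set.range f).ncard := by
  have hex : ∀ y : γ, y ∈ Set.range g → ∃ x, g x = y := fun y hy => hy
  rcases isEmpty_or_nonempty α with hα | hα
  · rw [Set.range_eq_empty g]; simp
  choose! p hp using hex
  refine Set.ncard_le_ncard_of_injOn (fun y => f (p y)) ?_ ?_ (Set.finite_range f)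
  · intro y _
    exact ⟨_, rfl⟩
  · intro y hy z hz hyz
    rw [← hp y hy, ← hp z hz]
    exact h _ _ hyz

/-- Simultaneous conjugation. -/
def tup {G : Type} [Group G] (X : Set G) (g : G) : X → G := fun x => g * x.1 * g⁻¹

theorem tup_card {G : Type} [Group G] [Finite G] (n : ℕ) (X : Set G)
    (hX : ∀ x ∈ X, (conjugatesOf x).ncard ≤ n) (hc : X.ncard ≤ n) (hn : 0 < n) :
    (Set.range (tup X)).ncard ≤ n ^ n := by
  classical
  have : Fintype X := Fintype.ofFinite X
  have hsub : Set.range (tup X) ⊆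
      ((Fintype.piFinset (fun x : X => (Set.toFinite (conjugatesOf x.1)).toFinset) : Finset (X → G)) : Set (X → G)) := by
    rintro _ ⟨g, rfl⟩
    simp only [Finset.mem_coe, Fintype.mem_piFinset, Set.Finite.mem_toFinset]
    intro x
    exact isConj_iff.2 ⟨g, rfl⟩
  refine (Set.ncard_le_ncard hsub (Finset.finite_toSet _)).trans ?_
  rw [Set.ncard_coe_finset, Fintype.card_piFinset]
  calc _ ≤ ∏ x : X, n := Finset.prod_le_prod' (fun x _ => by
        rw [← Set.ncard_eq_toFinset_card]; exact hX x.1 x.2)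
    _ = n ^ X.ncard := by
        rw [Finset.prod_const, Finset.card_univ, ← Nat.card_eq_fintype_card, Nat.card_coe_set_eq]
    _ ≤ n ^ n := Nat.pow_le_pow_right hn hc

theorem conj_eq_of_tup {G : Type} [Group G] {X : Set G} {g h : G} (e : tup X g = tup X h) {t : G}
    (ht : t ∈ closure X) : g * t * g⁻¹ = h * t * h⁻¹ := by
  have : Set.EqOn (MulAut.conj g).toMonoidHom (MulAut.conj h).toMonoidHom (closure X) := by
    apply MonoidHom.eqOn_closure
    intro x hx
    exact congrFun e ⟨x, hx⟩
  exact this ht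

theorem conjugatesOf_ncard_eq {G : Type} [Group G] {a b : G} (h : IsConj a b) :
    (conjugatesOf b).ncard = (conjugatesOf a).ncard := by
  rw [isConj_iff_conjugatesOf_eq.1 h]

theorem n_pos {G : Type} [Group G] [Finite G] {n : ℕ} {a : G} (ha : (conjugatesOf a).ncard ≤ n) : 0 < n :=
  lt_of_lt_of_le ((Set.ncard_pos (Set.toFinite _)).2 ⟨a, mem_conjugatesOf_self⟩) ha

theorem closure_conj {G : Type} [Group G] (a : G) :
    normalClosure {a} = closure (conjugatesOf a) := by
  simp [normalClosure, Group.conjugatesOfSet]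

/-- bound for Schur. -/
def B1 (n : ℕ) : ℕ := ∑ i ∈ Finset.range (n ^ n * n ^ n + 1), cardCommutatorBound i

theorem card_T' {G : Type} [Group G] [Finite G] (n : ℕ) (a : G)
    (ha : (conjugatesOf a).ncard ≤ n) :
    Nat.card (commutator (normalClosure ({a} : Set G))) ≤ B1 n := by
  have hn := n_pos ha
  set X := conjugatesOf a with hX
  have h0 : (Set.range (tup X)).ncard ≤ n ^ n :=
    tup_card n X (fun x hx => by rw [conjugatesOf_ncard_eq hx]; exact ha) ha hn
  have h1 : Nat.card (commutatorSet (normalClosure ({a} : Set G))) ≤ n ^ n * n ^ n := by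
    let T := normalClosure ({a} : Set G)
    have e : commutatorSet T = Set.range (fun p : T × T => p.1 * p.2 * p.1⁻¹ * p.2⁻¹) := by
      ext x
      constructor
      · rintro ⟨s, t, rfl⟩
        exact ⟨(s, t), rfl⟩
      · rintro ⟨⟨s, t⟩, rfl⟩
        exact ⟨s, t, rfl⟩
    change Nat.card (commutatorSet T) ≤ _
    rw [Nat.card_coe_set_eq, e]
    refine (ncard_range_le_of_factors
      (fun p : T × T => (tup X (p.1 : G), tup X (p.2 : G))) _ ?_).trans ?_
    · rintro ⟨t, s⟩ ⟨t', s'⟩ h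
      simp only [Prod.mk.injEq] at h
      have m : ∀ y : T, (y : G) ∈ closure X := fun y => by
        rw [hX, ← closure_conj]; exact y.2
      have e1 := conj_eq_of_tup h.1 (m s)
      have e2 := conj_eq_of_tup h.2 (inv_mem (m t'))
      apply Subtype.ext
      simp only [Subgroup.coe_mul, Subgroup.coe_inv]
      rw [e1]
      calc (t' : G) * (s : G) * (t' : G)⁻¹ * (s : G)⁻¹ = (t' : G) * ((s : G) * (t' : G)⁻¹ * (s : G)⁻¹) := by group
        _ = _ := by rw [e2]; group
    · calc _ ≤ (Set.range (tup X) ×ˢ Set.range (tup X)).ncard := by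
            refine Set.ncard_le_ncard ?_ (Set.toFinite _)
            rintro _ ⟨p, rfl⟩
            exact ⟨⟨_, rfl⟩, ⟨_, rfl⟩⟩
        _ = (Set.range (tup X)).ncard * (Set.range (tup X)).ncard := Set.ncard_prod
        _ ≤ _ := Nat.mul_le_mul h0 h0
  refine (card_commutator_le_of_finite_commutatorSet _).trans ?_
  exact Finset.single_le_sum (f := cardCommutatorBound) (fun _ _ => Nat.zero_le _)
    (Finset.mem_range.2 (Nat.lt_succ_of_le h1))

/-- bound for E. -/
def B2 (n : ℕ) : ℕ := B1 n * n.factorial ^ (n * n)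

theorem card_E {G : Type} [Group G] [Finite G] (n : ℕ) (a : G)
    (ha : (conjugatesOf a).ncard ≤ n) (Y : Set G) (hY : ∀ x ∈ Y, (conjugatesOf x).ncard ≤ n) :
    Nat.card (⁅closure Y, normalClosure ({a} : Set G)⁆ : Subgroup G) ≤ B2 n := by
  classical
  set T := normalClosure ({a} : Set G) with hT
  have hconj : ∀ b, IsConj a b → b ∈ T := fun b hb => by
    rw [hT, closure_conj]; exact subset_closure hb
  let ab : T →* Abelianization T := Abelianization.of
  let N := n.factorial
  let S : Set (Abelianization T) :=
    (fun p : T × T => ab p.1 * (ab p.2)⁻¹) '' {p | IsConj a (p.1 : G) ∧ IsConj a (p.2 : G) ∧ (p.1 : G) ^ N = (p.2 : G) ^ N}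
  have hSc : S.ncard ≤ n * n := by
    refine (Set.ncard_image_le (Set.toFinite _)).trans ?_
    refine (Set.ncard_le_ncard_of_injOn (t := conjugatesOf a ×ˢ conjugatesOf a)
      (fun p : T × T => ((p.1 : G), (p.2 : G))) ?_ ?_ (Set.toFinite _)).trans ?_
    · rintro p hp
      exact ⟨hp.1, hp.2.1⟩
    · rintro ⟨p, q⟩ _ ⟨p', q'⟩ _ h
      simpa using h
    · rw [Set.ncard_prod]; exact Nat.mul_le_mul ha ha
  have hSN : ∀ x ∈ S, x ^ N = 1 := by
    rintro _ ⟨p, ⟨_, _, hp⟩, rfl⟩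
    have : p.1 ^ N = p.2 ^ N := Subtype.ext (by simpa using hp)
    simp only [mul_pow, inv_pow, ← map_pow, this, mul_inv_cancel]
  let D := closure S
  have hD : Nat.card D ≤ N ^ (n * n) := by
    have h := card_closure_le (Set.toFinite S).toFinset N (Nat.factorial_pos n)
      (fun x hx => hSN x (by simpa using hx))
    rw [Set.Finite.coe_toFinset, ← Set.ncard_eq_toFinset_card] at h
    exact h.trans (Nat.pow_le_pow_right (Nat.factorial_pos n) hSc)
  -- the big subgroup
  have hcomap : Nat.card (D.comap ab) ≤ B1 n * N ^ (n * n) := by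
    have hk : Nat.card (D.comap ab) = Nat.card ab.ker * Nat.card D := by
      have hs : Function.Surjective ab := QuotientGroup.mk_surjective
      have i1 := (D.comap ab).card_mul_index
      rw [index_comap_of_surjective D hs] at i1
      have i2 := D.card_mul_index
      have i3 := ab.ker.card_mul_index
      rw [index_ker, MonoidHom.range_eq_top.2 hs, card_top, ← i2, ← i1, ← mul_assoc] at i3
      exact (Nat.eq_of_mul_eq_mul_right (Nat.pos_of_ne_zero D.index_ne_zero_of_finite) i3).symm
    rw [hk]
    refine Nat.mul_le_mul ?_ hD
    have : ab.ker = commutator T := Abelianization.ker_of T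
    rw [this]
    exact card_T' n a ha
  have hle : ⁅closure Y, T⁆ ≤ (D.comap ab).map T.subtype := by
    rw [commutator_le]
    intro h hh t ht
    have hcen : ∀ b : G, h * b ^ N = b ^ N * h := by
      intro b
      have : closure Y ≤ centralizer {b ^ N} := by
        rw [closure_le]
        intro x hx
        exact mem_centralizer_singleton_iff.2 (pow_fact_commute n b x (hY x hx)).symm
      exact mem_centralizer_singleton_iff.1 (this hh)
    let c : T →* T := (MulAut.conjNormal h).toMonoidHom
    have hc : ∀ t : T, ((c t : T) : G) = h * t * h⁻¹ := fun t => by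
      simp [c]
    let ψ : T →* Abelianization T := (ab.comp c) / ab
    have hψ : ∀ t : T, ψ t ∈ D := by
      have : ∀ g (hg : g ∈ closure (conjugatesOf a)) (hg' : g ∈ T), ψ ⟨g, hg'⟩ ∈ D := by
        intro g hg
        induction hg using closure_induction with
        | mem x hx =>
          intro hg'
          refine subset_closure ⟨(c ⟨x, hg'⟩, ⟨x, hg'⟩), ⟨?_, hx, ?_⟩, ?_⟩
          · rw [hc]
            exact IsConj.trans hx (isConj_iff.2 ⟨h, rfl⟩)
          · simp only [hc, conj_pow]
            rw [hcen]; group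
          · simp [ψ, div_eq_mul_inv]
        | one => intro hg'; exact (map_one ψ) ▸ one_mem D
        | mul x y hx hy ihx ihy =>
          intro hg'
          rw [← closure_conj] at hx hy
          have := mul_mem (ihx hx) (ihy hy)
          rw [← map_mul] at this
          exact this
        | inv x hx ihx =>
          intro hg'
          rw [← closure_conj] at hx
          have := inv_mem (ihx hx)
          rw [← map_inv] at this
          exact this
      intro t
      exact this t.1 (by rw [← closure_conj]; exact t.2) t.2
    refine ⟨c ⟨t, ht⟩ * (⟨t, ht⟩ : T)⁻¹, ?_, ?_⟩
    · have := hψ ⟨t, ht⟩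
      simpa [ψ, div_eq_mul_inv] using this
    · simp [hc, commutatorElement_def]
  refine (Nat.card_mono (Set.toFinite _) hle).trans ?_
  refine le_trans ?_ hcomap
  exact (Nat.card_congr (equivMapOfInjective (D.comap ab) T.subtype T.subtype_injective).toEquiv).symm.le

/-- final bound. -/
def B3 (n : ℕ) : ℕ := (B2 n + 1) ^ (n ^ n) * B2 n

theorem card_HH {G : Type} [Group G] [Finite G] (n : ℕ) (K : Subgroup G)
    (hK : ∀ x ∈ K, (conjugatesOf x).ncard ≤ n) :
    Nat.card (⁅normalClosure (K : Set G), normalClosure (K : Set G)⁆ : Subgroup G) ≤ B3 n := by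
  classical
  have hn : 0 < n := n_pos (hK 1 K.one_mem)
  set X := Group.conjugatesOfSet (K : Set G) with hXdef
  have hX : ∀ x ∈ X, (conjugatesOf x).ncard ≤ n := by
    intro x hx
    obtain ⟨k, hk, hkx⟩ := Group.mem_conjugatesOfSet_iff.1 hx
    rw [conjugatesOf_ncard_eq hkx]
    exact hK k hk
  set H := normalClosure (K : Set G) with hH
  have hHX : H = closure X := rfl
  let E : G → Subgroup G := fun a => ⁅H, normalClosure ({a} : Set G)⁆
  have hEc : ∀ a ∈ K, Nat.card (E a) ≤ B2 n := fun a ha => card_E n a (hK a ha) X hX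
  have hEm : ∀ a, ∀ h ∈ H, h * a * h⁻¹ * a⁻¹ ∈ E a := fun a h hh =>
    commutator_mem_commutator hh (subset_normalClosure rfl)
  -- maximal element
  obtain ⟨a, haK, hmax⟩ : ∃ a ∈ (K : Set G), ∀ b ∈ (K : Set G),
      ((fun x => x * b * x⁻¹) '' X).ncard ≤ ((fun x => x * a * x⁻¹) '' X).ncard :=
    Set.exists_max_image (K : Set G) (fun b => ((fun x => x * b * x⁻¹) '' X).ncard)
      (Set.toFinite _) ⟨1, K.one_mem⟩
  obtain ⟨X0, hX0, hbij⟩ := Set.exists_subset_bijOn X (fun x => x * a * x⁻¹)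
  have hX0c : X0.ncard ≤ n := by
    rw [← Set.InjOn.ncard_image hbij.injOn, hbij.image_eq]
    refine (Set.ncard_le_ncard ?_ (Set.toFinite _)).trans (hK a haK)
    rintro _ ⟨x, _, rfl⟩
    exact isConj_iff.2 ⟨x, rfl⟩
  -- key
  have key : ∀ u ∈ K, (∀ x ∈ X0, x * u = u * x) → ∀ x ∈ X, x * u * x⁻¹ * u⁻¹ ∈ E a := by
    intro u hu hux x hx
    have himg : (fun x => x * (u * a) * x⁻¹) '' X0 = (fun y => u * y) '' ((fun x => x * a * x⁻¹) '' X) := by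
      rw [← hbij.image_eq, Set.image_image]
      refine Set.image_congr fun y hy => ?_
      rw [← mul_assoc, hux y hy]; group
    have hsub : (fun x => x * (u * a) * x⁻¹) '' X0 = (fun x => x * (u * a) * x⁻¹) '' X := by
      refine Set.eq_of_subset_of_ncard_le (Set.image_mono hX0) ?_ (Set.toFinite _)
      rw [himg, Set.ncard_image_of_injective _ (mul_right_injective u)]
      exact hmax _ (K.mul_mem hu haK)
    have hm : x * (u * a) * x⁻¹ ∈ (fun x => x * (u * a) * x⁻¹) '' X := ⟨x, hx, rfl⟩
    rw [← hsub] at hm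
    obtain ⟨y, hy, hyx⟩ := hm
    have hxH : x ∈ H := subset_closure hx
    have hyH : y ∈ H := subset_closure (hX0 hy)
    have e1 : y * (u * a) * y⁻¹ = u * (y * a * y⁻¹) := by
      rw [← mul_assoc, hux y hy]; group
    have hyx' : x * u * x⁻¹ = u * (y * a * y⁻¹) * (x * a * x⁻¹)⁻¹ := by
      rw [← e1]
      have : y * (u * a) * y⁻¹ = x * (u * a) * x⁻¹ := hyx
      rw [this]; group
    have hnorm : (E a).Normal := inferInstance
    have h3 : (y * a * y⁻¹ * a⁻¹) * (x * a * x⁻¹ * a⁻¹)⁻¹ ∈ E a :=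
      mul_mem (hEm a y hyH) (inv_mem (hEm a x hxH))
    have h4 := hnorm.conj_mem _ h3 u
    rw [hyx']
    convert h4 using 1
    group
  -- transversal
  obtain ⟨R, hR, hRbij⟩ := Set.exists_subset_bijOn (K : Set G) (tup X0)
  have hRc : R.ncard ≤ n ^ n := by
    rw [← Set.InjOn.ncard_image hRbij.injOn, hRbij.image_eq]
    refine (Set.ncard_le_ncard (Set.image_subset_range _ _) (Set.toFinite _)).trans ?_
    exact tup_card n X0 (fun x hx => hX x (hX0 hx)) hX0c hn
  let Rf := (Set.toFinite R).toFinset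
  have hRf : ∀ i ∈ Rf, i ∈ K := fun i hi => hR (by simpa [Rf] using hi)
  obtain ⟨hL1, hL2⟩ := card_biSup_le Rf E (fun _ _ => inferInstance) (B2 n + 1)
    (fun i hi => (hEc i (hRf i hi)).trans (Nat.le_succ _))
  let L := Rf.sup E ⊔ E a
  have hLc : Nat.card L ≤ B3 n := by
    refine (card_sup_le _ _).trans (Nat.mul_le_mul (hL1.trans ?_) (hEc a haK))
    refine Nat.pow_le_pow_right (Nat.succ_pos _) ?_
    rw [← Set.ncard_eq_toFinset_card]; exact hRc
  have hLn : L.Normal := inferInstance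
  refine (Nat.card_mono (Set.toFinite _) ?_).trans hLc
  let q := QuotientGroup.mk' L
  let Z := (centralizer ((H.map q : Subgroup (G ⧸ L)) : Set (G ⧸ L))).comap q
  have hmapn : (H.map q).Normal := Subgroup.Normal.map inferInstance q (QuotientGroup.mk'_surjective L)
  have hq : ∀ h u : G, h * u * h⁻¹ * u⁻¹ ∈ L ↔ q h * q u = q u * q h := by
    intro h u
    rw [← QuotientGroup.eq_one_iff]
    change q _ = 1 ↔ _
    simp only [map_mul, map_inv]
    rw [mul_inv_eq_one, mul_inv_eq_iff_eq_mul]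
  have hZ : ∀ u : G, u ∈ Z ↔ ∀ h ∈ H, q h * q u = q u * q h := by
    intro u
    simp only [Z, mem_comap, mem_centralizer_iff]
    constructor
    · intro h y hy
      exact h (q y) ⟨y, hy, rfl⟩
    · rintro h _ ⟨y, hy, rfl⟩
      exact h y hy
  have hU : ∀ u ∈ K, (∀ x ∈ X0, x * u = u * x) → u ∈ Z := by
    intro u hu hux
    rw [hZ]
    have : H ≤ (centralizer {q u}).comap q := by
      rw [hHX, closure_le]
      intro x hx
      refine mem_centralizer_singleton_iff.2 ?_
      exact (hq x u).1 ((le_sup_right : E a ≤ L) (key u hu hux x hx))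
    intro h hh
    exact mem_centralizer_singleton_iff.1 (this hh)
  have hKZ : (K : Set G) ⊆ Z := by
    intro k hk
    have : tup X0 k ∈ tup X0 '' (K : Set G) := ⟨k, hk, rfl⟩
    rw [← hRbij.image_eq] at this
    obtain ⟨t, ht, htk⟩ := this
    have htZ : t ∈ Z := by
      rw [hZ]
      intro h hh
      refine (hq h t).1 ((le_sup_left : _ ≤ L) ?_)
      exact (Finset.le_sup (f := E) (show t ∈ Rf by simpa [Rf] using ht)) (hEm t h hh)
    have hu : t⁻¹ * k ∈ Z := by
      refine hU _ (K.mul_mem (K.inv_mem (hR ht)) hk) ?_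
      intro x hx
      have e := congrFun htk ⟨x, hx⟩
      simp only [tup] at e
      have e' : k * x = t * x * t⁻¹ * k := by rw [e]; group
      rw [mul_assoc, e']; group
    have := Z.mul_mem htZ hu
    simpa using this
  have hZn : Z.Normal := inferInstance
  have hHZ : H ≤ Z := normalClosure_le_normal hKZ
  change ⁅H, H⁆ ≤ L
  rw [commutator_le]
  intro h hh u hu
  exact (hq h u).2 ((hZ u).1 (hHZ hu) h hh)

theorem commutator_le_of_fixed {G : Type} [Group G] [Finite G] (φ : MulAut G)
    (hφ : orderOf φ = 2) (hG : (Nat.card G).Coprime 2) (H : Subgroup G) [H.Normal]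
    (hH : H.map φ.toMonoidHom ≤ H) (hC : ∀ x, φ x = x → x ∈ H) : commutator G ≤ H := by
  have h2 : ∀ g, φ (φ g) = g := by
    intro g
    have := pow_orderOf_eq_one φ
    rw [hφ, sq] at this
    exact DFunLike.congr_fun this g
  let ψ : G ⧸ H →* G ⧸ H := QuotientGroup.map H H φ.toMonoidHom (map_le_iff_le_comap.1 hH)
  have hψ : ∀ g : G, ψ (g : G ⧸ H) = ((φ g : G) : G ⧸ H) := fun g => rfl
  have hinv : Function.Involutive ψ := by
    intro x
    induction x using QuotientGroup.induction_on with
    | H g => rw [hψ, hψ, h2]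
  have hfpf : MonoidHom.FixedPointFree ψ := by
    intro x
    induction x using QuotientGroup.induction_on with
    | H g =>
      intro hx
      rw [hψ, eq_comm, QuotientGroup.eq] at hx
      -- k = g⁻¹ φ g
      set k := g⁻¹ * φ g with hk
      have hφk : φ k = k⁻¹ := by
        simp [hk, h2]
      obtain ⟨m, hm⟩ : Odd (Nat.card G) := by
        rw [← Nat.coprime_two_right]; exact hG
      have hpow : k ^ (2 * m + 1) = 1 := by rw [← hm]; exact pow_card_eq_one'
      set l := k ^ (m + 1) with hl
      have hl2 : l * l = k := by
        rw [hl, ← pow_add, show m + 1 + (m + 1) = (2 * m + 1) + 1 by ring, pow_succ, hpow, one_mul]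
      have hφl : φ l = l⁻¹ := by rw [hl, map_pow, hφk, inv_pow]
      have hφg : φ g = g * k := by rw [hk]; group
      have hfix : φ (g * l) = g * l := by
        rw [map_mul, hφl, hφg, ← hl2]; group
      have h1 := hC _ hfix
      have h3 : l ∈ H := H.pow_mem hx _
      rw [QuotientGroup.eq_one_iff]
      have := H.mul_mem h1 (H.inv_mem h3)
      simpa using this
  rw [commutator_def, commutator_le]
  intro x _ y _
  rw [← QuotientGroup.eq_one_iff]
  have := (MonoidHom.FixedPointFree.commute_all_of_involutive hfpf hinv (x : G ⧸ H) (y : G ⧸ H))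
  have h4 := commutatorElement_eq_one_iff_commute.2 this
  exact h4

end BFC

/-- If a finite group `G` of odd order admits an automorphism `φ` of order 2 with
`|x^G| ≤ n` for each fixed point `x` of `φ`, then the second derived subgroup `G''`
has `n`-bounded order. -/
theorem stmt_7 :
    ∃ f : ℕ → ℕ, ∀ n : ℕ, ∀ (G : Type) [Group G] [Finite G] (φ : MulAut G),
      orderOf φ = 2 → (Nat.card G).Coprime 2 →
      (∀ x : G, φ x = x → (conjugatesOf x).Finite ∧ Nat.card (conjugatesOf x) ≤ n) →
      Nat.card (⁅commutator G, commutator G⁆ : Subgroup G) ≤ f n := by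
  refine ⟨BFC.B3, ?_⟩
  intro n G _ _ φ hφ hG hx
  let K : Subgroup G := MonoidHom.eqLocus φ.toMonoidHom (MonoidHom.id G)
  have hKm : ∀ x, x ∈ K ↔ φ x = x := fun x => Iff.rfl
  have hK : ∀ x ∈ K, (conjugatesOf x).ncard ≤ n := fun x h => by
    rw [← Nat.card_coe_set_eq]; exact (hx x h).2
  refine le_trans (Nat.card_mono (Set.toFinite _) ?_) (BFC.card_HH n K hK)
  have hle : commutator G ≤ Subgroup.normalClosure (K : Set G) := by
    refine BFC.commutator_le_of_fixed φ hφ hG _ ?_ ?_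
    · rw [Subgroup.map_le_iff_le_comap]
      have : ((Subgroup.normalClosure (K : Set G)).comap φ.toMonoidHom).Normal := inferInstance
      refine Subgroup.normalClosure_le_normal ?_
      intro x hxK
      have h1 : φ x = x := hxK
      change φ x ∈ Subgroup.normalClosure (K : Set G)
      rw [h1]
      exact Subgroup.subset_normalClosure hxK
    · intro x h
      exact Subgroup.subset_normalClosure h
  exact Subgroup.commutator_mono hle hle
end
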